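/- For all words σ, τ ∈ Ω, one has ξ^{-3} |J_σ| |J_τ| ≤ |J_{στ}| ≤ ξ^{3} |J_σ| |J_τ|. -/

import Mathlib

open MeasureTheory Filter Metric

noncomputable section

/-- A cookie-cutter system on `J = [0,1]`. -/
structure CookieCutter where
  N : ℕ
  hN : 2 ≤ N
  Jsub : Fin N → Set ℝ
  f : ℝ → ℝ
  φ : Fin N → ℝ → ℝ
  c : ℝ
  γ : ℝ
  b : ℝ
  B : ℝ
  hJsub_sub : ∀ j, Jsub j ⊆ Set.Icc 0 1
  hJsub_interval : ∀ j, ∃ u v : ℝ, u ≤ v ∧ Jsub j = Set.Icc u v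
  hJsub_disj : ∀ i j, i ≠ j → Disjoint (Jsub i) (Jsub j)
  hbij : ∀ j, Set.BijOn f (Jsub j) (Set.Icc 0 1)
  hφ_maps : ∀ j, ∀ x ∈ Set.Icc (0:ℝ) 1, φ j x ∈ Jsub j
  hφ_rinv : ∀ j, ∀ x ∈ Set.Icc (0:ℝ) 1, f (φ j x) = x
  hφ_linv : ∀ j, ∀ x ∈ Jsub j, φ j (f x) = x
  hfdiff : ∀ j, ∀ x ∈ Jsub j, DifferentiableAt ℝ f x
  hφdiff : ∀ j, ∀ x ∈ Set.Icc (0:ℝ) 1, DifferentiableAt ℝ (φ j) x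
  hc : 0 < c
  hγ : γ ∈ Set.Ioc (0:ℝ) 1
  hHolder : ∀ j, ∀ x ∈ Jsub j, ∀ y ∈ Jsub j, |deriv f x - deriv f y| ≤ c * |x - y| ^ γ
  hb : IsGLB ((fun x => |deriv f x|) '' ⋃ j, Jsub j) b
  hB : IsLUB ((fun x => |deriv f x|) '' ⋃ j, Jsub j) B
  hb1 : 1 < b

namespace CookieCutter

variable (cc : CookieCutter)

/-- `φ_σ = φ_{σ_1} ∘ ⋯ ∘ φ_{σ_n}` for a word `σ`. -/
def wordMap : List (Fin cc.N) → ℝ → ℝ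
  | [] => id
  | j :: rest => cc.φ j ∘ wordMap rest

/-- The basic interval `J_σ = φ_σ(J)`. -/
def Jc (σ : List (Fin cc.N)) : Set ℝ := cc.wordMap σ '' Set.Icc 0 1

/-- The diameter `|J_σ|`. -/
def diamJ (σ : List (Fin cc.N)) : ℝ := Metric.diam (cc.Jc σ)

/-- `‖φ'_σ‖ = sup_{x ∈ J} |φ'_σ(x)|`. -/
def φnorm (σ : List (Fin cc.N)) : ℝ :=
  sSup ((fun x => |deriv (cc.wordMap σ) x|) '' Set.Icc 0 1)

/-- The distortion constant `ξ = exp (c / (b^γ − 1))`. -/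
def xi : ℝ := Real.exp (cc.c / (cc.b ^ cc.γ - 1))

/-- The cookie-cutter set `E = ⋂_{n ≥ 1} ⋃_{σ ∈ Ω_n} J_σ`. -/
def E : Set ℝ := ⋂ (n : ℕ) (_ : 1 ≤ n), ⋃ σ : Fin n → Fin cc.N, cc.Jc (List.ofFn σ)

/-- `η = ξ^{9h}`. -/
def eta (h : ℝ) : ℝ := cc.xi ^ ((9:ℝ) * h)

/-- `L = η³ ξ^{3h}`. -/
def Lconst (h : ℝ) : ℝ := (cc.eta h) ^ 3 * cc.xi ^ ((3:ℝ) * h)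

/-- A Gibbs-like measure for the cookie-cutter system: a Borel probability measure
supported on `E` with `η⁻¹|J_σ|^h ≤ μ(J_σ) ≤ η|J_σ|^h` for every word `σ`. -/
def IsGibbsLike (μ : Measure ℝ) (h : ℝ) : Prop :=
  IsProbabilityMeasure μ ∧ μ (cc.Eᶜ) = 0 ∧
    ∀ σ : List (Fin cc.N), σ ≠ [] →
      (cc.eta h)⁻¹ * cc.diamJ σ ^ h ≤ (μ (cc.Jc σ)).toReal ∧
      (μ (cc.Jc σ)).toReal ≤ cc.eta h * cc.diamJ σ ^ h

/-- A finite maximal antichain in `Ω`. -/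
def IsFMA (Γ : Finset (List (Fin cc.N))) : Prop :=
  (∀ σ ∈ Γ, σ ≠ []) ∧
  (∀ ω : ℕ → Fin cc.N, ∃ k : ℕ, 1 ≤ k ∧ (List.ofFn fun i : Fin k => ω i) ∈ Γ) ∧
  ∀ σ ∈ Γ, ∀ τ ∈ Γ, σ <+: τ → σ = τ

end CookieCutter

/-- The `n`-th quantization error of order `r`. -/
def Vnr (μ : Measure ℝ) (n : ℕ) (r : ℝ) : ℝ :=
  sInf ((fun α : Finset ℝ => ∫ x, Metric.infDist x (α : Set ℝ) ^ r ∂μ) ''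
    {α : Finset ℝ | α.Nonempty ∧ α.card ≤ n})

/-- The auxiliary quantization error `u_{n,r}` with `U = (0,1)`. -/
def unr (μ : Measure ℝ) (n : ℕ) (r : ℝ) : ℝ :=
  sInf ((fun α : Finset ℝ =>
      ∫ x, Metric.infDist x ((α : Set ℝ) ∪ (Set.Ioo (0:ℝ) 1)ᶜ) ^ r ∂μ) ''
    {α : Finset ℝ | α.card ≤ n})

namespace CookieCutter

variable (cc : CookieCutter)

theorem wordMap_append (σ τ : List (Fin cc.N)) :
    cc.wordMap (σ ++ τ) = cc.wordMap σ ∘ cc.wordMap τ := by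
  induction σ with
  | nil => rfl
  | cons j σ ih => simp only [List.cons_append, wordMap, ih, Function.comp_assoc]

theorem wordMap_mem (σ : List (Fin cc.N)) {x : ℝ} (hx : x ∈ Set.Icc (0 : ℝ) 1) :
    cc.wordMap σ x ∈ Set.Icc (0 : ℝ) 1 := by
  induction σ with
  | nil => exact hx
  | cons j σ ih => exact cc.hJsub_sub j (cc.hφ_maps j _ ih)

theorem le_abs_deriv {j : Fin cc.N} {z : ℝ} (hz : z ∈ cc.Jsub j) : cc.b ≤ |deriv cc.f z| :=
  cc.hb.1 ⟨z, Set.mem_iUnion.2 ⟨j, hz⟩, rfl⟩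

/-- Mean value theorem for the inverse branch `φ_j`, in terms of `f'`. -/
theorem exists_abs_sub_eq (j : Fin cc.N) {x y : ℝ} (hx : x ∈ Set.Icc (0 : ℝ) 1)
    (hy : y ∈ Set.Icc (0 : ℝ) 1) :
    ∃ z ∈ cc.Jsub j, z ∈ Set.uIcc (cc.φ j x) (cc.φ j y) ∧
      |x - y| = |deriv cc.f z| * |cc.φ j x - cc.φ j y| := by
  obtain ⟨u, v, -, hJ⟩ := cc.hJsub_interval j
  have hsub : Set.uIcc (cc.φ j x) (cc.φ j y) ⊆ cc.Jsub j := by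
    have h1 := cc.hφ_maps j x hx
    have h2 := cc.hφ_maps j y hy
    rw [hJ] at h1 h2 ⊢
    exact Set.uIcc_subset_Icc h1 h2
  have key : ∀ p q : ℝ, p < q → Set.Icc p q ⊆ cc.Jsub j →
      ∃ z ∈ Set.Icc p q, |cc.f q - cc.f p| = |deriv cc.f z| * |q - p| := by
    intro p q hpq hs
    obtain ⟨z, hz, h⟩ := exists_deriv_eq_slope cc.f hpq
      (fun t ht => (cc.hfdiff j t (hs ht)).continuousAt.continuousWithinAt)
      (fun t ht => (cc.hfdiff j t (hs (Set.Ioo_subset_Icc_self ht))).differentiableWithinAt)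
    refine ⟨z, Set.Ioo_subset_Icc_self hz, ?_⟩
    rw [h, ← abs_mul, div_mul_cancel₀ _ (sub_pos.2 hpq).ne']
  have hfx := cc.hφ_rinv j x hx
  have hfy := cc.hφ_rinv j y hy
  rcases lt_trichotomy (cc.φ j x) (cc.φ j y) with h | h | h
  · rw [Set.uIcc_of_le h.le] at hsub ⊢
    obtain ⟨z, hz, e⟩ := key _ _ h hsub
    rw [hfx, hfy, abs_sub_comm, abs_sub_comm (cc.φ j y)] at e
    exact ⟨z, hsub hz, hz, e⟩
  · refine ⟨_, cc.hφ_maps j x hx, Set.left_mem_uIcc, ?_⟩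
    rw [← hfx, ← hfy, h]
    simp
  · rw [Set.uIcc_of_ge h.le] at hsub ⊢
    obtain ⟨z, hz, e⟩ := key _ _ h hsub
    rw [hfx, hfy] at e
    exact ⟨z, hsub hz, hz, e⟩

theorem abs_wordMap_sub_le (σ : List (Fin cc.N)) {x y : ℝ} (hx : x ∈ Set.Icc (0 : ℝ) 1)
    (hy : y ∈ Set.Icc (0 : ℝ) 1) :
    |cc.wordMap σ x - cc.wordMap σ y| ≤ cc.b⁻¹ ^ σ.length := by
  have hb := cc.hb1
  induction σ with
  | nil =>
    simp only [wordMap, id, List.length_nil, pow_zero]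
    rw [abs_le]
    constructor <;> linarith [hx.1, hx.2, hy.1, hy.2]
  | cons j σ ih =>
    obtain ⟨z, hz, -, e⟩ := cc.exists_abs_sub_eq j (cc.wordMap_mem σ hx) (cc.wordMap_mem σ hy)
    have hbz := cc.le_abs_deriv hz
    simp only [wordMap, Function.comp, List.length_cons]
    rw [pow_succ, ← div_eq_mul_inv, le_div_iff₀ (by linarith), mul_comm]
    calc _ ≤ |deriv cc.f z| * |cc.φ j (cc.wordMap σ x) - cc.φ j (cc.wordMap σ y)| := by gcongr
      _ ≤ _ := e ▸ ih

theorem one_lt_b_rpow : 1 < cc.b ^ cc.γ := Real.one_lt_rpow cc.hb1 cc.hγ.1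

theorem one_le_xi : 1 ≤ cc.xi :=
  Real.one_le_exp (div_nonneg cc.hc.le (by linarith [cc.one_lt_b_rpow]))

theorem abs_sub_le_of_mem_uIcc {p q r s z w d : ℝ} (hz : z ∈ Set.uIcc p q)
    (hw : w ∈ Set.uIcc r s) (h1 : |p - r| ≤ d) (h2 : |p - s| ≤ d) (h3 : |q - r| ≤ d)
    (h4 : |q - s| ≤ d) : |z - w| ≤ d := by
  rw [abs_le] at *
  rw [Set.mem_uIcc] at hz hw
  rcases hz with hz | hz <;> rcases hw with hw | hw <;> constructor <;> linarith

theorem abs_deriv_le_exp_mul {j : Fin cc.N} {z w : ℝ} (hz : z ∈ cc.Jsub j) (hw : w ∈ cc.Jsub j)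
    (n : ℕ) (h : |z - w| ≤ cc.b⁻¹ ^ n) :
    |deriv cc.f w| ≤ Real.exp (cc.c * (cc.b ^ cc.γ)⁻¹ ^ n) * |deriv cc.f z| := by
  have hb := cc.hb1
  have hc := cc.hc
  have hpow : |z - w| ^ cc.γ ≤ (cc.b ^ cc.γ)⁻¹ ^ n := by
    refine (Real.rpow_le_rpow (abs_nonneg _) h cc.hγ.1.le).trans_eq ?_
    rw [← Real.rpow_pow_comm (by positivity), Real.inv_rpow (by positivity)]
  have h1 := abs_sub_abs_le_abs_sub (deriv cc.f w) (deriv cc.f z)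
  rw [abs_sub_comm] at h1
  have h2 := cc.hHolder j z hz w hw
  have h3 : cc.c * |z - w| ^ cc.γ ≤ cc.c * (cc.b ^ cc.γ)⁻¹ ^ n := by gcongr
  have h4 := cc.le_abs_deriv hz
  have h5 : 0 ≤ cc.c * (cc.b ^ cc.γ)⁻¹ ^ n := by positivity
  have h6 := Real.add_one_le_exp (cc.c * (cc.b ^ cc.γ)⁻¹ ^ n)
  calc |deriv cc.f w| ≤ (cc.c * (cc.b ^ cc.γ)⁻¹ ^ n + 1) * |deriv cc.f z| := by nlinarith
    _ ≤ _ := by gcongr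

theorem abs_wordMap_sub_mul_le_exp_mul (σ : List (Fin cc.N)) {x y u v : ℝ}
    (hx : x ∈ Set.Icc (0 : ℝ) 1) (hy : y ∈ Set.Icc (0 : ℝ) 1) (hu : u ∈ Set.Icc (0 : ℝ) 1)
    (hv : v ∈ Set.Icc (0 : ℝ) 1) :
    |cc.wordMap σ x - cc.wordMap σ y| * |u - v| ≤
      Real.exp (cc.c * (1 - (cc.b ^ cc.γ)⁻¹ ^ σ.length) / (cc.b ^ cc.γ - 1)) *
        (|cc.wordMap σ u - cc.wordMap σ v| * |x - y|) := by
  induction σ with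
  | nil => simp [wordMap, mul_comm]
  | cons j σ ih =>
    obtain ⟨z, hz, hz', ez⟩ := cc.exists_abs_sub_eq j (cc.wordMap_mem σ hx) (cc.wordMap_mem σ hy)
    obtain ⟨w, hw, hw', ew⟩ := cc.exists_abs_sub_eq j (cc.wordMap_mem σ hu) (cc.wordMap_mem σ hv)
    have hzw : |z - w| ≤ cc.b⁻¹ ^ (j :: σ).length :=
      abs_sub_le_of_mem_uIcc hz' hw' (cc.abs_wordMap_sub_le (j :: σ) hx hu)
        (cc.abs_wordMap_sub_le (j :: σ) hx hv) (cc.abs_wordMap_sub_le (j :: σ) hy hu)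
        (cc.abs_wordMap_sub_le (j :: σ) hy hv)
    have hd := cc.abs_deriv_le_exp_mul hz hw _ hzw
    have hz0 : 0 < |deriv cc.f z| := by linarith [cc.le_abs_deriv hz, cc.hb1]
    have hbγ := cc.one_lt_b_rpow
    have hexp : cc.c * (1 - (cc.b ^ cc.γ)⁻¹ ^ (j :: σ).length) / (cc.b ^ cc.γ - 1) =
        cc.c * (1 - (cc.b ^ cc.γ)⁻¹ ^ σ.length) / (cc.b ^ cc.γ - 1) +
          cc.c * (cc.b ^ cc.γ)⁻¹ ^ (j :: σ).length := by
      have h1 : cc.b ^ cc.γ - 1 ≠ 0 := by linarith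
      have h2 : cc.b ^ cc.γ ≠ 0 := by linarith
      rw [List.length_cons, pow_succ]
      generalize (cc.b ^ cc.γ)⁻¹ ^ σ.length = Q
      field_simp
      ring
    rw [hexp, Real.exp_add]
    simp only [wordMap, Function.comp]
    rw [ez, ew] at ih
    have hS0 := Real.exp_nonneg
      (cc.c * (1 - (cc.b ^ cc.γ)⁻¹ ^ σ.length) / (cc.b ^ cc.γ - 1))
    generalize Real.exp (cc.c * (1 - (cc.b ^ cc.γ)⁻¹ ^ σ.length) / (cc.b ^ cc.γ - 1)) = S
      at ih hS0 ⊢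
    rw [← mul_le_mul_iff_right₀ hz0]
    calc |deriv cc.f z| * (|cc.φ j (cc.wordMap σ x) - cc.φ j (cc.wordMap σ y)| * |u - v|)
        ≤ S * (|deriv cc.f w| * |cc.φ j (cc.wordMap σ u) - cc.φ j (cc.wordMap σ v)| * |x - y|) := by
          rw [← mul_assoc]
          exact ih
      _ ≤ S * (Real.exp (cc.c * (cc.b ^ cc.γ)⁻¹ ^ (j :: σ).length) * |deriv cc.f z| *
            |cc.φ j (cc.wordMap σ u) - cc.φ j (cc.wordMap σ v)| * |x - y|) := by gcongr
      _ = _ := by ring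

/-- Bounded distortion, in terms of difference quotients of `φ_σ`. -/
theorem abs_wordMap_sub_mul_le_xi_mul (σ : List (Fin cc.N)) {x y u v : ℝ}
    (hx : x ∈ Set.Icc (0 : ℝ) 1) (hy : y ∈ Set.Icc (0 : ℝ) 1) (hu : u ∈ Set.Icc (0 : ℝ) 1)
    (hv : v ∈ Set.Icc (0 : ℝ) 1) :
    |cc.wordMap σ x - cc.wordMap σ y| * |u - v| ≤
      cc.xi * (|cc.wordMap σ u - cc.wordMap σ v| * |x - y|) := by
  refine (cc.abs_wordMap_sub_mul_le_exp_mul σ hx hy hu hv).trans ?_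
  have hbγ := cc.one_lt_b_rpow
  have hc := cc.hc
  have hQ : 0 ≤ (cc.b ^ cc.γ)⁻¹ ^ σ.length := by positivity
  unfold xi
  gcongr
  nlinarith

theorem isBounded_Jc (σ : List (Fin cc.N)) : Bornology.IsBounded (cc.Jc σ) :=
  (isBounded_Icc (0 : ℝ) 1).subset (Set.image_subset_iff.2 fun _ hx => cc.wordMap_mem σ hx)

theorem abs_sub_le_diamJ (σ : List (Fin cc.N)) {x y : ℝ} (hx : x ∈ Set.Icc (0 : ℝ) 1)
    (hy : y ∈ Set.Icc (0 : ℝ) 1) : |cc.wordMap σ x - cc.wordMap σ y| ≤ cc.diamJ σ :=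
  dist_le_diam_of_mem (cc.isBounded_Jc σ) (Set.mem_image_of_mem _ hx) (Set.mem_image_of_mem _ hy)

theorem diamJ_le (σ : List (Fin cc.N)) {d : ℝ} (hd : 0 ≤ d)
    (h : ∀ x ∈ Set.Icc (0 : ℝ) 1, ∀ y ∈ Set.Icc (0 : ℝ) 1,
      |cc.wordMap σ x - cc.wordMap σ y| ≤ d) : cc.diamJ σ ≤ d := by
  refine diam_le_of_forall_dist_le hd ?_
  rintro _ ⟨x, hx, rfl⟩ _ ⟨y, hy, rfl⟩
  exact h x hx y hy

theorem diamJ_nonneg (σ : List (Fin cc.N)) : 0 ≤ cc.diamJ σ := diam_nonneg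

theorem diamJ_append_le (σ τ : List (Fin cc.N)) :
    cc.diamJ (σ ++ τ) ≤ cc.xi * cc.diamJ σ * cc.diamJ τ := by
  have h0 : (0 : ℝ) ∈ Set.Icc (0 : ℝ) 1 := by simp
  have h1 : (1 : ℝ) ∈ Set.Icc (0 : ℝ) 1 := by simp
  have hxi := cc.one_le_xi
  have hσ := cc.diamJ_nonneg σ
  have hτ := cc.diamJ_nonneg τ
  refine cc.diamJ_le _ (by positivity) fun x hx y hy => ?_
  rw [wordMap_append]
  have h := cc.abs_wordMap_sub_mul_le_xi_mul σ (cc.wordMap_mem τ hx) (cc.wordMap_mem τ hy) h1 h0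
  rw [sub_zero, abs_one, mul_one] at h
  refine h.trans ?_
  rw [mul_assoc]
  gcongr
  · exact cc.abs_sub_le_diamJ σ h1 h0
  · exact cc.abs_sub_le_diamJ τ hx hy

theorem diamJ_mul_le (σ τ : List (Fin cc.N)) :
    cc.diamJ σ * cc.diamJ τ ≤ cc.xi * cc.diamJ (σ ++ τ) := by
  have hxi := cc.one_le_xi
  have hσ := cc.diamJ_nonneg σ
  have hστ := cc.diamJ_nonneg (σ ++ τ)
  have key : ∀ u ∈ Set.Icc (0 : ℝ) 1, ∀ v ∈ Set.Icc (0 : ℝ) 1, ∀ x ∈ Set.Icc (0 : ℝ) 1,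
      ∀ y ∈ Set.Icc (0 : ℝ) 1, |cc.wordMap σ u - cc.wordMap σ v| *
        |cc.wordMap τ x - cc.wordMap τ y| ≤ cc.xi * cc.diamJ (σ ++ τ) := by
    intro u hu v hv x hx y hy
    refine (cc.abs_wordMap_sub_mul_le_xi_mul σ hu hv (cc.wordMap_mem τ hx) (cc.wordMap_mem τ hy)).trans ?_
    have h := cc.abs_sub_le_diamJ (σ ++ τ) hx hy
    rw [wordMap_append] at h
    have huv : |u - v| ≤ 1 := by simpa [wordMap] using cc.abs_wordMap_sub_le [] hu hv
    gcongr
    exact (mul_le_of_le_one_right (abs_nonneg _) huv).trans h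
  have step : ∀ x ∈ Set.Icc (0 : ℝ) 1, ∀ y ∈ Set.Icc (0 : ℝ) 1,
      cc.diamJ σ * |cc.wordMap τ x - cc.wordMap τ y| ≤ cc.xi * cc.diamJ (σ ++ τ) := by
    intro x hx y hy
    rcases (abs_nonneg (cc.wordMap τ x - cc.wordMap τ y)).eq_or_lt with h | h
    · rw [← h, mul_zero]
      positivity
    · rw [← le_div_iff₀ h]
      exact cc.diamJ_le σ (by positivity) fun u hu v hv =>
        (le_div_iff₀ h).2 (key u hu v hv x hx y hy)
  rcases hσ.eq_or_lt with h | h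
  · rw [← h, zero_mul]
    positivity
  · rw [← le_div_iff₀' h]
    exact cc.diamJ_le τ (by positivity) fun x hx y hy => (le_div_iff₀' h).2 (step x hx y hy)

end CookieCutter

theorem diam_quasi_multiplicative (cc : CookieCutter) :
    ∀ σ τ : List (Fin cc.N), σ ≠ [] → τ ≠ [] →
      (cc.xi ^ 3)⁻¹ * cc.diamJ σ * cc.diamJ τ ≤ cc.diamJ (σ ++ τ) ∧
      cc.diamJ (σ ++ τ) ≤ cc.xi ^ 3 * cc.diamJ σ * cc.diamJ τ := by
  intro σ τ _ _
  have hxi := cc.one_le_xi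
  have hpow : cc.xi ≤ cc.xi ^ 3 := le_self_pow₀ hxi (by norm_num)
  have hσ := cc.diamJ_nonneg σ
  have hτ := cc.diamJ_nonneg τ
  have hστ := cc.diamJ_nonneg (σ ++ τ)
  constructor
  · rw [mul_assoc, inv_mul_le_iff₀ (by positivity)]
    exact (cc.diamJ_mul_le σ τ).trans (by gcongr)
  · exact (cc.diamJ_append_le σ τ).trans (by gcongr)
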